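/- Unique multiplicative extension to the gap-insertion operad: let B be a complex vector space and for each k ≥ 2 let f_k ∈ Hom(B)(k) be a k-multilinear map, satisfying the interchange relation f_m ∘_m f_n = f_n ∘_1 f_m for all m, n ≥ 2. Then there exists a unique family (f_π)_{π ∈ NC(n), n ≥ 0} with f_π ∈ Hom(B)(n+1) for π ∈ NC(n), such that f_∅ = id_B, f_{1_{k}} = f_k for every one-block partition 1_k = {[1,k−1]} (k ≥ 2), and f_{ρ(π; α₁,…,α_{n+1})} = f_π ∘ (f_{α₁},…,f_{α_{n+1}}) for every π ∈ NC(n) and all non-crossing partitions α₁,…,α_{n+1}. -/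

import Mathlib

/-!
Existence. The family is computed by a stack machine reading `1, …, n` from left to right. It keeps
a current value, initially `b 0`, and a stack of argument lists, one for each block that has been
opened but not yet closed. Reading the element `j` records the current value as an argument of the
block of `j`; if `j` is not the last element of its block, the current value becomes the input
`b j`, and otherwise the completed argument list, followed by `b j`, is fed to the appropriate `f k`
and the result becomes the current value.

The word of `ρ(π; α₀, …, α_n)` is the word of `π` with the words of the `α i` inserted in
the gaps. Each inserted word is balanced (`isBalanced_tokens`), so it leaves the stack as it was and
only changes the current value (`run_balanced`). What remains is that evaluating `α` on a first
argument of the form `f m (x₁, …, x_{m-1}, y)` gives `f m (x₁, …, x_{m-1}, ·)` of the value of `α`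
on `y`. The interchange relation says this for each single `f n`, and `lift_run` propagates it
through the machine. This yields `run_step`, and multiplicativity (`multExt_gapInsert`) by
induction along `π`. Non-crossingness plays no role in this half.

Uniqueness. A nonempty non-crossing partition has an interval block, so it is obtained
from a smaller non-crossing partition by inserting a one-block partition in one gap and empty
partitions in the others (`exists_gapInsert_eq`); two multiplicative families thus agree by strong
induction on `n`.
-/

/-!
Preliminaries: set partitions of `[n] = {1,…,n}` encoded as `Finset (Finset ℕ)`,
the non-crossing condition, and the gap-insertion composite `ρ(π; α₁,…,α_{n+1})`.
Gaps are indexed by `0,…,n` (gap `i` sits between the elements `i` and `i+1`,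
gap `0` before `1`, gap `n` after `n`).
-/

/-- `π` is a partition of `[n] = {1,…,n}` into nonempty blocks. -/
def IsPartitionOn (n : ℕ) (π : Finset (Finset ℕ)) : Prop :=
  (∀ B ∈ π, B.Nonempty) ∧ (∀ B ∈ π, ∀ x ∈ B, x ∈ Finset.Icc 1 n) ∧
    (∀ x ∈ Finset.Icc 1 n, ∃! B, B ∈ π ∧ x ∈ B)

/-- `π` is non-crossing: there are no `a < c < b < d` with `a, b` in one block and
`c, d` in a different block. -/
def IsNoncrossing (π : Finset (Finset ℕ)) : Prop :=
  ∀ B ∈ π, ∀ C ∈ π, B ≠ C →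
    ∀ a ∈ B, ∀ b ∈ B, ∀ c ∈ C, ∀ d ∈ C, ¬(a < c ∧ c < b ∧ b < d)

/-- `gapShift k m = k₀ + ⋯ + k_{m-1}`, the total size of the partitions inserted in the
gaps strictly before position `m`. -/
def gapShift (k : ℕ → ℕ) (m : ℕ) : ℕ := ∑ l ∈ Finset.range m, k l

/-- The gap-insertion composite `ρ(π; α₀,…,α_n)` of a partition `π` of `[n]` with
partitions `α i` of `[k i]` (`0 ≤ i ≤ n`, gaps indexed from `0`):
the blocks of `α i` are shifted upward by `i + k₀ + ⋯ + k_{i-1}`, and in the blocks of `π`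
each element `j` is replaced by `j + k₀ + ⋯ + k_{j-1}`. -/
def gapInsert (n : ℕ) (k : ℕ → ℕ) (π : Finset (Finset ℕ))
    (α : ℕ → Finset (Finset ℕ)) : Finset (Finset ℕ) :=
  ((Finset.range (n + 1)).biUnion fun i =>
      (α i).image fun B => B.image fun x => x + i + gapShift k i)
    ∪ π.image fun B => B.image fun j => j + gapShift k j

/-- The one-block partition `1_{k+1} = {[1,k]}` of `[k]`. -/
def oneBlock (k : ℕ) : Finset (Finset ℕ) := {Finset.Icc 1 k}

/-- Arity-free encoding of a multilinear operator on `B`: an operator with `n` inputs is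
a function of input sequences `ℕ → B` that only uses the coordinates `0,…,n-1`. -/
def Op (B : Type*) : Type _ := (ℕ → B) → B

/-- The `k`-multilinear map `f ∈ Hom(B)(k)` regarded as an arity-free operator. -/
def toOp {B : Type*} [AddCommGroup B] [Module ℂ B] (k : ℕ)
    (f : MultilinearMap ℂ (fun _ : Fin k => B) B) : Op B :=
  fun b => f fun i => b (i : ℕ)

/-- The identity operator `id_B` (one input). -/
def opId (B : Type*) : Op B := fun b => b 0

/-- Operadic composition `f ∘ (g₀, g₁, …)`, where `g i` has arity `ar i`: the inputs are
split into consecutive blocks of sizes `ar 0, ar 1, …`, the `i`-th block is fed to `g i`,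
and the outputs are fed into `f`. -/
def opComp {B : Type*} (ar : ℕ → ℕ) (f : Op B) (g : ℕ → Op B) : Op B :=
  fun b => f fun i => g i fun t => b (t + ∑ l ∈ Finset.range i, ar l)

/-- Partial composition `f ∘ᵢ g` (1-indexed slot `i`, `g` of arity `m`): substitute `g`
into the `i`-th argument of `f`. -/
def opPartial {B : Type*} (i m : ℕ) (f g : Op B) : Op B :=
  opComp (fun l => if l + 1 = i then m else 1) f
    (fun l => if l + 1 = i then g else opId B)

/-! ### The stack machine -/

section Machine

variable {B : Type*} [AddCommGroup B] [Module ℂ B]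
  (f : ∀ k : ℕ, MultilinearMap ℂ (fun _ : Fin k => B) B)

/-- The maps `f k` bundled into one function on argument lists: `f` of the length of the list
is applied to its entries. -/
def evalList (l : List B) : B := toOp l.length (f l.length) fun i => l.getD i 0

/-- A state of the stack machine. Each frame of the stack is a block that has been opened and not
yet closed, with the arguments collected so far; these are never empty, so the first one is kept
apart from the others. The second component is the current value. -/
abbrev MState (B : Type*) : Type _ := List (B × List B) × B

/-- The stack after the current value `c` has been recorded as an argument: in a new frame if an
opening element is read, in the top frame otherwise. With no frame to extend (which does
not happen for words of partitions) a new one is created; this convention makes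
`lift_step` hold unconditionally. -/
def pushArg (isMin : Bool) (S : List (B × List B)) (c : B) : List (B × List B) :=
  match isMin, S with
  | true, S => (c, []) :: S
  | false, [] => [(c, [])]
  | false, t :: R => (t.1, t.2 ++ [c]) :: R

/-- One step of the machine: read an element with flags `tok = (isMin, isMax)` telling whether it
is the first, respectively the last, element of its block, and then the input `b` of the gap
following it. -/
def step (tok : Bool × Bool) (b : B) (s : MState B) : MState B :=
  match tok.2, pushArg tok.1 s.1 s.2 with
  | false, S => (S, b)
  | true, [] => ([], b)
  | true, t :: R => (R, evalList f (t.1 :: (t.2 ++ [b])))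

/-- The state reached from `s` after reading the elements `1, …, j` of the word `tok` with
inputs `b 1, …, b j`. -/
def run (tok : ℕ → Bool × Bool) (b : ℕ → B) (s : MState B) : ℕ → MState B
  | 0 => s
  | j + 1 => step f (tok (j + 1)) (b (j + 1)) (run tok b s j)

/-- Apply `φ` to the first argument of the bottom frame, if there is one. -/
def liftStack (φ : B → B) : List (B × List B) → List (B × List B)
  | [] => []
  | [t] => [(φ t.1, t.2)]
  | t :: u :: R => t :: liftStack φ (u :: R)

/-- Apply `φ` to the value derived from the initial one: the current value if the stack is
empty, and otherwise the first argument of the bottom frame. -/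
def liftState (φ : B → B) (s : MState B) : MState B :=
  match s.1 with
  | [] => ([], φ s.2)
  | t :: R => (liftStack φ (t :: R), s.2)

open Classical in
/-- The word of a set partition: element `j` is sent to the pair of flags telling whether it is
minimal, respectively maximal, in its block. -/
noncomputable def tokens (π : Finset (Finset ℕ)) (j : ℕ) : Bool × Bool :=
  (decide (∀ V ∈ π, j ∈ V → ∀ y ∈ V, j ≤ y), decide (∀ V ∈ π, j ∈ V → ∀ y ∈ V, y ≤ j))

/-- The multiplicative extension: run the machine on the word of `π`, starting with an empty stack
and current value `b 0`. -/
noncomputable def multExt (n : ℕ) (π : Finset (Finset ℕ)) : Op B :=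
  fun b => (run f (tokens π) b ([], b 0) n).2

variable {f}

lemma evalList_eq {n : ℕ} {l : List B} {b : ℕ → B} (hl : l.length = n)
    (h : ∀ i < n, l.getD i 0 = b i) : evalList f l = toOp n (f n) b := by
  subst hl
  unfold evalList toOp
  congr 1
  funext i
  exact h i i.2

/-! ### Interchange and the first argument of the machine -/

/-- The interchange relation in terms of argument lists. -/
lemma evalList_interchange
    (hinter : ∀ m n : ℕ, 2 ≤ m → 2 ≤ n →
      opPartial m n (toOp m (f m)) (toOp n (f n)) =
        opPartial 1 m (toOp n (f n)) (toOp m (f m)))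
    (y z : B) (ys zs : List B) (hzs : zs ≠ []) :
    evalList f (y :: (ys ++ [evalList f (z :: zs)])) =
      evalList f (evalList f (y :: (ys ++ [z])) :: zs) := by
  have hpos : 0 < zs.length := List.length_pos_iff.2 hzs
  set m := ys.length + 2 with hm
  set n := zs.length + 1 with hn
  set b : ℕ → B := fun i => (y :: (ys ++ z :: zs)).getD i 0 with hb
  have hb1 : ∀ i, b (i + (ys.length + 1)) = (z :: zs).getD i 0 := by
    intro i
    simp only [hb]
    rw [show i + (ys.length + 1) = (i + ys.length) + 1 by ring, List.getD_cons_succ,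
      List.getD_append_right _ _ _ _ (by omega)]
    simp
  have hb2 : ∀ i < ys.length + 1, b i = (y :: ys).getD i 0 := by
    intro i hi
    simp only [hb]
    rw [← List.cons_append, List.getD_append _ _ _ _ (by simpa using hi)]
  have h := congrFun (hinter m n (by omega) (by omega)) b
  simp only [opPartial, opComp] at h
  have sum1 : ∀ i < m, ∑ l ∈ Finset.range i, (if l + 1 = m then n else 1) = i := by
    intro i hi
    rw [Finset.sum_congr rfl (g := fun _ => 1)]
    · simp
    · intro l hl
      have := Finset.mem_range.1 hl
      rw [if_neg (by omega)]
  have sum2 : ∀ i, ∑ l ∈ Finset.range (i + 1), (if l + 1 = 1 then m else 1) = i + m := by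
    intro i
    rw [Finset.sum_range_succ']
    simp
  refine Eq.trans ?_ (h.trans ?_)
  · refine evalList_eq (n := m) (by simp; omega) fun i hi => ?_
    simp only [sum1 i hi]
    rcases Nat.lt_or_ge i (ys.length + 1) with h1 | h1
    · rw [if_neg (by omega), ← List.cons_append, List.getD_append _ _ _ _ (by simpa using h1)]
      simp only [opId, zero_add]
      exact (hb2 i h1).symm
    · obtain rfl : i = ys.length + 1 := by omega
      rw [if_pos (by omega), ← List.cons_append, List.getD_append_right _ _ _ _ (by simp)]
      simp only [List.length_cons, Nat.sub_self, List.getD_cons_zero]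
      exact evalList_eq (n := n) (by simp; omega) fun i _ => (hb1 i).symm
  · symm
    refine evalList_eq (n := n) (by simp; omega) fun i hi => ?_
    rcases i with _ | i
    · simp only [zero_add, if_true, List.getD_cons_zero, Finset.range_zero, Finset.sum_empty,
        add_zero]
      refine evalList_eq (n := m) (by simp; omega) fun i hi => ?_
      rcases Nat.lt_or_ge i (ys.length + 1) with h1 | h1
      · rw [hb2 i h1, ← List.cons_append, List.getD_append _ _ _ _ (by simpa using h1)]
      · obtain rfl : i = 0 + (ys.length + 1) := by omega
        rw [hb1, ← List.cons_append, List.getD_append_right _ _ _ _ (by simp)]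
        simp
    · simp only [sum2]
      rw [if_neg (by omega), List.getD_cons_succ]
      simp only [opId, zero_add]
      rw [show i + m = (i + 1) + (ys.length + 1) by omega, hb1, List.getD_cons_succ]

/-- If `φ` commutes with `evalList f (· :: zs)` for all nonempty `zs`, then `liftState φ` commutes
with every step of the machine. -/
lemma lift_step {φ : B → B}
    (hφ : ∀ z zs, zs ≠ [] → evalList f (φ z :: zs) = φ (evalList f (z :: zs)))
    (tok : Bool × Bool) (b : B) (s : MState B) :
    step f tok b (liftState φ s) = liftState φ (step f tok b s) := by
  obtain ⟨i, a⟩ := tok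
  obtain ⟨S, c⟩ := s
  rcases S with _ | ⟨t, _ | ⟨u, R⟩⟩ <;> cases i <;> cases a <;>
    simp [step, pushArg, liftState, liftStack, hφ]

lemma lift_run {φ : B → B}
    (hφ : ∀ z zs, zs ≠ [] → evalList f (φ z :: zs) = φ (evalList f (z :: zs)))
    (tok : ℕ → Bool × Bool) (b : ℕ → B) (s : MState B) (j : ℕ) :
    run f tok b (liftState φ s) j = liftState φ (run f tok b s j) := by
  induction j with
  | zero => rfl
  | succ j ih => simp only [run, ih, lift_step hφ]

/-- A step either outputs its input or applies some `f k` with the input as last argument, and its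
resulting stack does not depend on the input. -/
lemma step_eq (tok : Bool × Bool) (s : MState B) :
    ∃ (S : List (B × List B)) (ψ : B → B), (∀ b, step f tok b s = (S, ψ b)) ∧
      (ψ = id ∨ ∃ y ys, ψ = fun z => evalList f (y :: (ys ++ [z]))) := by
  obtain ⟨i, a⟩ := tok
  cases a
  · exact ⟨_, id, fun b => rfl, Or.inl rfl⟩
  · cases h : pushArg i s.1 s.2 with
    | nil => exact ⟨[], id, fun b => by simp [step, h], Or.inl rfl⟩
    | cons t R => exact ⟨R, _, fun b => by simp only [step, h], Or.inr ⟨t.1, t.2, rfl⟩⟩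

/-- Reading a concatenated word amounts to reading its two parts in turn. -/
lemma run_add (tok : ℕ → Bool × Bool) (b : ℕ → B) (s : MState B) (i j : ℕ) :
    run f tok b s (i + j) =
      run f (fun x => tok (x + i)) (fun x => b (x + i)) (run f tok b s i) j := by
  induction j with
  | zero => rfl
  | succ j ih =>
    rw [← add_assoc]
    simp only [run, ih]
    rw [show i + j + 1 = j + 1 + i by ring]

lemma run_congr {tok tok' : ℕ → Bool × Bool} {b b' : ℕ → B} {n : ℕ}
    (ht : ∀ j, 1 ≤ j → j ≤ n → tok j = tok' j) (hb : ∀ j, 1 ≤ j → j ≤ n → b j = b' j)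
    (s : MState B) : run f tok b s n = run f tok' b' s n := by
  induction n with
  | zero => rfl
  | succ n ih =>
    simp only [run]
    rw [ih (fun j h1 h2 => ht j h1 (by omega)) (fun j h1 h2 => hb j h1 (by omega)),
      ht _ (by omega) le_rfl, hb _ (by omega) le_rfl]

/-! ### Balanced words -/

/-- A word for which some `h j`, to be thought of as the number of blocks open after `j`
elements, behaves as it should: closing or continuing a block requires an open one. -/
def IsBalanced (tok : ℕ → Bool × Bool) (n : ℕ) : Prop :=
  ∃ h : ℕ → ℕ, h 0 = 0 ∧ h n = 0 ∧ ∀ j < n, ∃ e,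
    h j = e + (if (tok (j + 1)).1 then 0 else 1) ∧
    h (j + 1) = e + (if (tok (j + 1)).2 then 0 else 1)

lemma step_append (tok : Bool × Bool) (b : B) (T S : List (B × List B)) (c : B) (e : ℕ)
    (hT : T.length = e + (if tok.1 then 0 else 1)) :
    step f tok b (T ++ S, c) = ((step f tok b (T, c)).1 ++ S, (step f tok b (T, c)).2) ∧
      (step f tok b (T, c)).1.length = e + (if tok.2 then 0 else 1) := by
  obtain ⟨i, a⟩ := tok
  rcases T with _ | ⟨t, R⟩ <;> cases i <;> cases a <;> simp_all [step, pushArg]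

/-- A balanced word leaves the initial stack untouched, and its effect on the current value does
not depend on that stack. -/
lemma run_balanced {tok : ℕ → Bool × Bool} {n : ℕ} (ht : IsBalanced tok n) (b : ℕ → B)
    (S : List (B × List B)) (c : B) :
    run f tok b (S, c) n = (S, (run f tok b ([], c) n).2) ∧ (run f tok b ([], c) n).1 = [] := by
  obtain ⟨h, h0, hn, hs⟩ := ht
  have key : ∀ j ≤ n, run f tok b (S, c) j =
      ((run f tok b ([], c) j).1 ++ S, (run f tok b ([], c) j).2) ∧
      (run f tok b ([], c) j).1.length = h j := by
    intro j
    induction j with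
    | zero => intro _; simp [run, h0]
    | succ j ih =>
      intro hj
      obtain ⟨ih1, ih2⟩ := ih (by omega)
      obtain ⟨e, he1, he2⟩ := hs j (by omega)
      have := step_append (f := f) (tok (j + 1)) (b (j + 1)) (run f tok b ([], c) j).1 S
        (run f tok b ([], c) j).2 e (by rw [ih2, he1])
      simp only [run]
      rw [ih1, he2]
      exact this
  obtain ⟨k1, k2⟩ := key n le_rfl
  have hnil : (run f tok b ([], c) n).1 = [] := List.length_eq_zero_iff.1 (k2.trans hn)
  rw [hnil] at k1
  exact ⟨k1, hnil⟩

open Classical in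
/-- The witness is the number of blocks with elements on both sides of the
cut after `j`. -/
lemma isBalanced_tokens {n : ℕ} {π : Finset (Finset ℕ)} (hπ : IsPartitionOn n π) :
    IsBalanced (tokens π) n := by
  obtain ⟨-, hsub, huniq⟩ := hπ
  let O : ℕ → Finset (Finset ℕ) := fun j => π.filter fun V => (∃ x ∈ V, x ≤ j) ∧ ∃ y ∈ V, j < y
  refine ⟨fun j => (O j).card, ?_, ?_, ?_⟩
  · refine Finset.card_eq_zero.2 (Finset.filter_eq_empty_iff.2 ?_)
    rintro V hV ⟨⟨x, hx, hx0⟩, -⟩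
    have := Finset.mem_Icc.1 (hsub V hV x hx)
    omega
  · refine Finset.card_eq_zero.2 (Finset.filter_eq_empty_iff.2 ?_)
    rintro V hV ⟨-, ⟨x, hx, hx0⟩⟩
    have := Finset.mem_Icc.1 (hsub V hV x hx)
    omega
  · intro j hj
    obtain ⟨V, ⟨hV, hjV⟩, hVu⟩ := huniq (j + 1) (Finset.mem_Icc.2 ⟨by omega, by omega⟩)
    have hother : ∀ W ∈ π, W ≠ V → j + 1 ∉ W := fun W hW hne hjW => hne (hVu W ⟨hW, hjW⟩)
    have herase : (O j).erase V = (O (j + 1)).erase V := by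
      ext W
      simp only [O, Finset.mem_erase, Finset.mem_filter]
      refine and_congr_right fun hne => and_congr_right fun hW => ?_
      have hn := hother W hW hne
      refine and_congr (exists_congr fun x => and_congr_right fun hx => ?_)
        (exists_congr fun x => and_congr_right fun hx => ?_) <;>
      · have : x ≠ j + 1 := fun h => hn (h ▸ hx)
        omega
    have hmin : (tokens π (j + 1)).1 = true ↔ V ∉ O j := by
      simp only [tokens, decide_eq_true_eq, O, Finset.mem_filter, not_and, not_exists]
      constructor
      · rintro h - ⟨x, hx, hxj⟩
        have := h V hV hjV x hx
        omega
      · intro h W hW hjW y hy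
        rw [hVu W ⟨hW, hjW⟩] at hy
        by_contra hlt
        exact h hV ⟨y, hy, by omega⟩ (j + 1) hjV (by omega)
    have hmax : (tokens π (j + 1)).2 = true ↔ V ∉ O (j + 1) := by
      simp only [tokens, decide_eq_true_eq, O, Finset.mem_filter, not_and, not_exists]
      constructor
      · rintro h - - x hx hxj
        have := h V hV hjV x hx
        omega
      · intro h W hW hjW y hy
        rw [hVu W ⟨hW, hjW⟩] at hy
        by_contra hlt
        exact h hV ⟨_, hjV, le_rfl⟩ y hy (by omega)
    refine ⟨((O j).erase V).card, ?_, ?_⟩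
    · by_cases hm : V ∈ O j
      · rw [if_neg (by rw [hmin]; exact fun h => h hm), Finset.card_erase_add_one hm]
      · rw [if_pos (hmin.2 hm), Finset.erase_eq_of_notMem hm, add_zero]
    · rw [herase]
      by_cases hm : V ∈ O (j + 1)
      · rw [if_neg (by rw [hmax]; exact fun h => h hm), Finset.card_erase_add_one hm]
      · rw [if_pos (hmax.2 hm), Finset.erase_eq_of_notMem hm, add_zero]

/-! ### The word of a gap-insertion composite -/

/-- The position `i + k₀ + ⋯ + k_{i-1}` of the element `i` of `π` in the composite
`ρ(π; α₀, …, α_n)`. -/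
def pos (k : ℕ → ℕ) (i : ℕ) : ℕ := i + gapShift k i

lemma pos_succ (k : ℕ → ℕ) (i : ℕ) : pos k (i + 1) = pos k i + k i + 1 := by
  simp only [pos, gapShift, Finset.sum_range_succ]; ring

lemma pos_strictMono (k : ℕ → ℕ) : StrictMono (pos k) :=
  strictMono_nat_of_lt_succ fun i => by rw [pos_succ]; omega

/-- Elements of `π` and elements of an inserted partition occupy different positions. -/
lemma pos_ne {k : ℕ → ℕ} {i l x : ℕ} (h1 : 1 ≤ x) (h2 : x ≤ k l) : x + pos k l ≠ pos k i := by
  rcases Nat.lt_or_ge l i with h | h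
  · have := (pos_strictMono k).monotone (show l + 1 ≤ i from h)
    rw [pos_succ] at this; omega
  · have := (pos_strictMono k).monotone h
    omega

/-- Elements of different inserted partitions occupy different positions. -/
lemma pos_inj {k : ℕ → ℕ} {i l x y : ℕ} (hx : 1 ≤ x) (hx' : x ≤ k i) (hy : 1 ≤ y) (hy' : y ≤ k l)
    (h : x + pos k i = y + pos k l) : i = l := by
  rcases Nat.lt_trichotomy i l with h1 | h1 | h1
  · have := (pos_strictMono k).monotone (show i + 1 ≤ l from h1)
    rw [pos_succ] at this; omega
  · exact h1
  · have := (pos_strictMono k).monotone (show l + 1 ≤ i from h1)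
    rw [pos_succ] at this; omega

lemma mem_gapInsert {n : ℕ} {k : ℕ → ℕ} {π : Finset (Finset ℕ)} {α : ℕ → Finset (Finset ℕ)}
    {W : Finset ℕ} : W ∈ gapInsert n k π α ↔
      (∃ i ≤ n, ∃ V ∈ α i, V.image (fun x => x + pos k i) = W) ∨
        ∃ V ∈ π, V.image (pos k) = W := by
  simp only [gapInsert, Finset.mem_union, Finset.mem_biUnion, Finset.mem_range, Finset.mem_image,
    Nat.lt_succ_iff, pos, ← add_assoc]
  rfl

/-- The flags of an element only depend on the blocks containing it, up to an order embedding. -/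
lemma tokens_congr {π π' : Finset (Finset ℕ)} {j j' : ℕ} (p : ℕ → ℕ) (hp : StrictMono p)
    (hj : p j = j') (h : ∀ W, (W ∈ π' ∧ j' ∈ W) ↔ ∃ V, (V ∈ π ∧ j ∈ V) ∧ V.image p = W) :
    tokens π' j' = tokens π j := by
  subst hj
  have h1 : ∀ P : Finset ℕ → Prop, (∀ W ∈ π', p j ∈ W → P W) ↔
      ∀ V ∈ π, j ∈ V → P (V.image p) := by
    intro P
    constructor
    · intro hP V hV hjV
      obtain ⟨a, b⟩ := (h (V.image p)).2 ⟨V, ⟨hV, hjV⟩, rfl⟩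
      exact hP _ a b
    · intro hP W hW hjW
      obtain ⟨V, ⟨a, b⟩, rfl⟩ := (h W).1 ⟨hW, hjW⟩
      exact hP V a b
  simp only [tokens, h1 (fun W => ∀ y ∈ W, p j ≤ y), h1 (fun W => ∀ y ∈ W, y ≤ p j),
    Finset.forall_mem_image, hp.le_iff_le]

section Tokens

variable {n : ℕ} {k : ℕ → ℕ} {π : Finset (Finset ℕ)} {α : ℕ → Finset (Finset ℕ)}

lemma tokens_gapInsert_outer (hα : ∀ i ≤ n, IsPartitionOn (k i) (α i))
    (i : ℕ) : tokens (gapInsert n k π α) (pos k i) = tokens π i := by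
  refine tokens_congr (pos k) (pos_strictMono k) rfl fun W => ?_
  rw [mem_gapInsert]
  constructor
  · rintro ⟨⟨l, hl, V, hV, rfl⟩ | ⟨V, hV, rfl⟩, hm⟩
    · obtain ⟨x, hx, hxe⟩ := Finset.mem_image.1 hm
      have := Finset.mem_Icc.1 ((hα l hl).2.1 V hV x hx)
      exact absurd hxe (pos_ne this.1 this.2)
    · obtain ⟨x, hx, hxe⟩ := Finset.mem_image.1 hm
      exact ⟨V, ⟨hV, (pos_strictMono k).injective hxe ▸ hx⟩, rfl⟩
  · rintro ⟨V, ⟨hV, hi⟩, rfl⟩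
    exact ⟨Or.inr ⟨V, hV, rfl⟩, Finset.mem_image_of_mem _ hi⟩

lemma tokens_gapInsert_inner (hα : ∀ i ≤ n, IsPartitionOn (k i) (α i))
    {i x : ℕ} (hi : i ≤ n) (h1 : 1 ≤ x) (h2 : x ≤ k i) :
    tokens (gapInsert n k π α) (x + pos k i) = tokens (α i) x := by
  refine tokens_congr (· + pos k i) (fun a b h => by simpa using h) rfl fun W => ?_
  rw [mem_gapInsert]
  constructor
  · rintro ⟨⟨l, hl, V, hV, rfl⟩ | ⟨V, hV, rfl⟩, hm⟩
    · obtain ⟨y, hy, hye⟩ := Finset.mem_image.1 hm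
      have := Finset.mem_Icc.1 ((hα l hl).2.1 V hV y hy)
      obtain rfl := pos_inj this.1 this.2 h1 h2 hye
      obtain rfl : y = x := by omega
      exact ⟨V, ⟨hV, hy⟩, rfl⟩
    · obtain ⟨y, hy, hye⟩ := Finset.mem_image.1 hm
      exact absurd hye.symm (pos_ne h1 h2)
  · rintro ⟨V, ⟨hV, hx⟩, rfl⟩
    exact ⟨Or.inl ⟨i, hi, V, hV, rfl⟩, Finset.mem_image_of_mem _ hx⟩

end Tokens

/-! ### Multiplicativity and one-block values -/

/-- Reading the word of `α` after a step of the machine has the same effect as taking that step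
with the value of `α` as input. This is where the interchange relation is needed. -/
lemma run_step
    (hinter : ∀ m n : ℕ, 2 ≤ m → 2 ≤ n →
      opPartial m n (toOp m (f m)) (toOp n (f n)) =
        opPartial 1 m (toOp n (f n)) (toOp m (f m)))
    {k : ℕ} {α : Finset (Finset ℕ)} (hα : IsPartitionOn k α) (tok : Bool × Bool) (b : ℕ → B)
    (s : MState B) :
    run f (tokens α) b (step f tok (b 0) s) k = step f tok (multExt f k α b) s := by
  obtain ⟨S, ψ, hS, hψ⟩ := step_eq (f := f) tok s
  have hbal := isBalanced_tokens hα
  rw [hS, hS, (run_balanced hbal b S (ψ (b 0))).1]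
  congr 1
  rcases hψ with rfl | ⟨y, ys, rfl⟩
  · rfl
  · have h := lift_run (f := f) (φ := fun z => evalList f (y :: (ys ++ [z])))
      (fun z zs hzs => (evalList_interchange hinter y z ys zs hzs).symm) (tokens α) b ([], b 0) k
    have hnil := (run_balanced (f := f) hbal b [] (b 0)).2
    change run f (tokens α) b ([], _) k = _ at h
    rw [h]
    simp only [liftState, hnil, multExt]

/-- Multiplicativity, by comparing the run on the composite with the run on `π` whose inputs are the
values of the `α i`: after each inserted partition the two states agree. -/
lemma multExt_gapInsert
    (hinter : ∀ m n : ℕ, 2 ≤ m → 2 ≤ n →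
      opPartial m n (toOp m (f m)) (toOp n (f n)) =
        opPartial 1 m (toOp n (f n)) (toOp m (f m)))
    {n : ℕ} {k : ℕ → ℕ} (π : Finset (Finset ℕ)) {α : ℕ → Finset (Finset ℕ)}
    (hα : ∀ i ≤ n, IsPartitionOn (k i) (α i)) :
    multExt f (n + gapShift k (n + 1)) (gapInsert n k π α) =
      opComp (fun i => k i + 1) (multExt f n π) (fun i => multExt f (k i) (α i)) := by
  funext b
  have hsum : ∀ i, ∑ l ∈ Finset.range i, (k l + 1) = pos k i := by
    intro i
    simp [Finset.sum_add_distrib, pos, gapShift, add_comm]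
  simp only [opComp, hsum]
  set c : ℕ → B := fun i => multExt f (k i) (α i) fun t => b (t + pos k i) with hc
  set ρ := gapInsert n k π α with hρ
  -- The segment of the word of `ρ` after position `pos k i` is the word of `α i`.
  have hseg : ∀ i ≤ n, ∀ s, run f (fun x => tokens ρ (x + pos k i)) (fun x => b (x + pos k i)) s
      (k i) = run f (tokens (α i)) (fun x => b (x + pos k i)) s (k i) := fun i hi s =>
    run_congr (fun j h1 h2 => tokens_gapInsert_inner hα hi h1 h2) (fun _ _ _ => rfl) s
  have key : ∀ i ≤ n, run f (tokens ρ) b ([], b 0) (pos k i + k i) =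
      run f (tokens π) c ([], c 0) i := by
    intro i
    induction i with
    | zero =>
      intro hi
      rw [run_add, hseg 0 hi]
      have h0 : pos k 0 = 0 := by simp [pos, gapShift]
      simp only [hc, h0, run, add_zero, multExt]
      rw [(run_balanced (isBalanced_tokens (hα 0 hi)) b [] (b 0)).1]
    | succ i ih =>
      intro hi
      rw [run_add, hseg (i + 1) hi]
      have hp : run f (tokens ρ) b ([], b 0) (pos k (i + 1)) =
          step f (tokens π (i + 1)) (b (0 + pos k (i + 1))) (run f (tokens π) c ([], c 0) i) := by
        rw [← ih (by omega), ← tokens_gapInsert_outer hα (i + 1), zero_add, pos_succ]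
        rfl
      rw [hp, run_step hinter (hα (i + 1) hi) _ (fun x => b (x + pos k (i + 1)))]
      rfl
  have hN : n + gapShift k (n + 1) = pos k n + k n := by
    simp only [pos, gapShift, Finset.sum_range_succ]; ring
  rw [hN, multExt, key n le_rfl]
  rfl

lemma tokens_oneBlock {j x : ℕ} (h1 : 1 ≤ x) (h2 : x ≤ j) :
    tokens (oneBlock j) x = (decide (x = 1), decide (x = j)) := by
  refine Prod.ext (decide_eq_decide.2 ?_) (decide_eq_decide.2 ?_) <;>
    simp only [oneBlock, Finset.mem_singleton, forall_eq, Finset.mem_Icc] <;>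
    refine ⟨fun h => ?_, ?_⟩
  · have := h ⟨h1, h2⟩ 1 ⟨le_rfl, h1.trans h2⟩
    omega
  · rintro rfl _ y hy; exact hy.1
  · have := h ⟨h1, h2⟩ j ⟨h1.trans h2, le_rfl⟩
    omega
  · rintro rfl _ y hy; exact hy.2

lemma multExt_oneBlock {j : ℕ} (hj : 1 ≤ j) :
    multExt f j (oneBlock j) = toOp (j + 1) (f (j + 1)) := by
  funext b
  -- Before the last element, all inputs so far except the current one sit in a single frame.
  have key : ∀ i, i + 1 < j → run f (tokens (oneBlock j)) b ([], b 0) (i + 1) =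
      ([(b 0, (List.range i).map fun t => b (t + 1))], b (i + 1)) := by
    intro i
    induction i with
    | zero =>
      intro hi
      simp only [run]
      rw [tokens_oneBlock (by omega) (by omega)]
      have : ¬ 1 = j := by omega
      simp [step, pushArg, this]
    | succ i ih =>
      intro hi
      rw [run, ih (by omega), tokens_oneBlock (by omega) (by omega)]
      have : ¬ i + 1 + 1 = j := by omega
      simp [step, pushArg, this, List.range_succ]
  obtain ⟨i, rfl⟩ : ∃ i, j = i + 1 := ⟨j - 1, by omega⟩
  have hlast : multExt f (i + 1) (oneBlock (i + 1)) b =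
      evalList f ((List.range (i + 2)).map b) := by
    rw [multExt, run, tokens_oneBlock (by omega) le_rfl]
    rcases i with _ | i
    · simp [step, pushArg, run, List.range_succ]
    · rw [key i (by omega)]
      simp only [step, pushArg, show ¬ i + 1 + 1 = 1 by omega, decide_true, decide_false]
      congr 1
      rw [List.range_succ_eq_map]
      simp [List.range_succ, Function.comp_def]
  rw [hlast]
  exact evalList_eq (by simp) fun t ht => by
    rw [List.getD_eq_getElem _ _ (by simpa [Nat.lt_succ_iff] using ht)]; simp

end Machine

/-! ### Uniqueness -/

/-- `F` is a family on non-crossing partitions, multiplicative for gap insertion, with value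
`id` on the empty partition and values `f k` on the one-block partitions. -/
def IsMultExt {B : Type*} [AddCommGroup B] [Module ℂ B]
    (f : ∀ k : ℕ, MultilinearMap ℂ (fun _ : Fin k => B) B)
    (F : ℕ → Finset (Finset ℕ) → Op B) : Prop :=
  (F 0 (∅ : Finset (Finset ℕ)) = opId B) ∧
  (∀ j, 1 ≤ j → F j (oneBlock j) = toOp (j + 1) (f (j + 1))) ∧
  (∀ (n : ℕ) (k : ℕ → ℕ) (π : Finset (Finset ℕ)) (α : ℕ → Finset (Finset ℕ)),
    IsPartitionOn n π → IsNoncrossing π →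
    (∀ i ≤ n, IsPartitionOn (k i) (α i) ∧ IsNoncrossing (α i)) →
    F (n + gapShift k (n + 1)) (gapInsert n k π α) =
      opComp (fun i => k i + 1) (F n π) (fun i => F (k i) (α i)))

lemma isPartitionOn_empty : IsPartitionOn 0 ∅ := by
  simp [IsPartitionOn]

lemma isNoncrossing_empty : IsNoncrossing ∅ := by
  simp [IsNoncrossing]

lemma isPartitionOn_oneBlock {r : ℕ} (hr : 1 ≤ r) : IsPartitionOn r (oneBlock r) := by
  refine ⟨?_, ?_, ?_⟩
  · simp [oneBlock, hr]
  · simp [oneBlock]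
  · intro x hx
    exact ⟨Finset.Icc 1 r, ⟨by simp [oneBlock], hx⟩, fun V hV => by simpa [oneBlock] using hV.1⟩

lemma isNoncrossing_oneBlock (r : ℕ) : IsNoncrossing (oneBlock r) := by
  intro V hV W hW hne
  simp only [oneBlock, Finset.mem_singleton] at hV hW
  exact absurd (hV.trans hW.symm) hne

/-- A nonempty non-crossing partition has a block which is an interval: take a block for which
`max - min` is minimal. By non-crossingness any other block meeting its convex hull would lie strictly
inside, contradicting minimality. -/
lemma exists_interval_block {n : ℕ} {π : Finset (Finset ℕ)} (hπ : IsPartitionOn n π)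
    (hnc : IsNoncrossing π) (hn : 1 ≤ n) :
    ∃ a r, 1 ≤ r ∧ a + r ≤ n ∧ Finset.Icc (a + 1) (a + r) ∈ π := by
  obtain ⟨hne, hsub, huniq⟩ := hπ
  obtain ⟨V₀, ⟨hV₀, -⟩, -⟩ := huniq 1 (Finset.mem_Icc.2 ⟨le_rfl, hn⟩)
  obtain ⟨V, hV, hmin⟩ := Finset.exists_min_image π (fun V => V.sup id - sInf (V : Set ℕ))
    ⟨V₀, hV₀⟩
  have hlo : ∀ W ∈ π, sInf (W : Set ℕ) ∈ W ∧ ∀ x ∈ W, sInf (W : Set ℕ) ≤ x := fun W hW =>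
    ⟨by simpa using Nat.sInf_mem (s := (W : Set ℕ)) (by simpa using hne W hW),
      fun x hx => Nat.sInf_le (by simpa using hx)⟩
  have hhi : ∀ W ∈ π, W.sup id ∈ W ∧ ∀ x ∈ W, x ≤ W.sup id := fun W hW =>
    ⟨by
      obtain ⟨x, hx, hxe⟩ := Finset.exists_mem_eq_sup W (hne W hW) id
      rw [hxe]; exact hx,
      fun x hx => Finset.le_sup (f := id) hx⟩
  obtain ⟨hl1, hl2⟩ := hlo V hV
  obtain ⟨hh1, hh2⟩ := hhi V hV
  set l := sInf (V : Set ℕ) with hl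
  set h := V.sup id with hh
  have hl0 := Finset.mem_Icc.1 (hsub V hV l hl1)
  have hh0 := Finset.mem_Icc.1 (hsub V hV h hh1)
  have hlh := hl2 h hh1
  have hVeq : V = Finset.Icc l h := by
    refine Finset.Subset.antisymm (fun x hx => Finset.mem_Icc.2 ⟨hl2 x hx, hh2 x hx⟩) ?_
    intro x hx
    rw [Finset.mem_Icc] at hx
    by_contra hxV
    obtain ⟨W, ⟨hW, hxW⟩, -⟩ := huniq x (Finset.mem_Icc.2 ⟨by omega, by omega⟩)
    have hWV : W ≠ V := fun e => hxV (e ▸ hxW)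
    have hxl : x ≠ l := fun e => hxV (e ▸ hl1)
    have hxh : x ≠ h := fun e => hxV (e ▸ hh1)
    have hdisj : ∀ y ∈ W, y ∉ V := by
      intro y hyW hyV
      obtain ⟨_, _, hu⟩ := huniq y (hsub V hV y hyV)
      exact hWV ((hu W ⟨hW, hyW⟩).trans (hu V ⟨hV, hyV⟩).symm)
    obtain ⟨wl1, wl2⟩ := hlo W hW
    obtain ⟨wh1, wh2⟩ := hhi W hW
    have c1 := hnc V hV W hW hWV.symm l hl1 h hh1 x hxW _ wh1
    have c2 := hnc W hW V hV hWV _ wl1 x hxW l hl1 h hh1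
    have e1 : sInf (W : Set ℕ) ≠ l := fun e => hdisj _ wl1 (e ▸ hl1)
    have e2 : W.sup id ≠ h := fun e => hdisj _ wh1 (e ▸ hh1)
    have m : h - l ≤ W.sup id - sInf (W : Set ℕ) := hmin W hW
    have m1 := wl2 x hxW
    have m2 := wh2 x hxW
    omega
  refine ⟨l - 1, h - l + 1, by omega, by omega, ?_⟩
  rw [show l - 1 + 1 = l by omega, show l - 1 + (h - l + 1) = h by omega, ← hVeq]
  exact hV

/-- Every nonempty non-crossing partition is the composite of a smaller non-crossing partition
with a one-block partition in a single gap `a`, the other gaps being empty. -/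
lemma exists_gapInsert_eq {n : ℕ} {π : Finset (Finset ℕ)} (hπ : IsPartitionOn n π)
    (hnc : IsNoncrossing π) (hn : 1 ≤ n) :
    ∃ (m a r : ℕ) (σ : Finset (Finset ℕ)), m < n ∧ 1 ≤ r ∧ IsPartitionOn m σ ∧ IsNoncrossing σ ∧
      n = m + gapShift (fun i => if i = a then r else 0) (m + 1) ∧
      π = gapInsert m (fun i => if i = a then r else 0) σ
        (fun i => if i = a then oneBlock r else ∅) := by
  obtain ⟨a, r, hr, har, hI⟩ := exists_interval_block hπ hnc hn
  obtain ⟨hne, hsub, huniq⟩ := hπ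
  set k : ℕ → ℕ := fun i => if i = a then r else 0 with hk
  have hshift : ∀ j, gapShift k j = if j ≤ a then 0 else r := by
    intro j
    simp only [gapShift, hk, Finset.sum_ite_eq', Finset.mem_range]
    split_ifs <;> omega
  have hpos : ∀ j, pos k j = if j ≤ a then j else j + r := by
    intro j
    rw [pos, hshift]
    split_ifs <;> rfl
  have hmono := pos_strictMono k
  -- `q` closes the gap left by removing the interval block; it is inverse to `pos k`.
  set q : ℕ → ℕ := fun x => if x ≤ a then x else x - r with hq
  have hqp : ∀ j, q (pos k j) = j := by
    intro j
    simp only [hq, hpos]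
    split_ifs <;> omega
  set I := Finset.Icc (a + 1) (a + r) with hIdef
  have hout : ∀ V ∈ π, V ≠ I → ∀ x ∈ V, pos k (q x) = x ∧ 1 ≤ q x ∧ q x ≤ n - r := by
    intro V hV hVI x hx
    have hx1 := Finset.mem_Icc.1 (hsub V hV x hx)
    have : x ∉ I := by
      intro hxI
      obtain ⟨_, _, hu⟩ := huniq x (hsub V hV x hx)
      exact hVI ((hu V ⟨hV, hx⟩).trans (hu I ⟨hI, hxI⟩).symm)
    rw [hIdef, Finset.mem_Icc] at this
    simp only [hq, hpos]
    split_ifs <;> omega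
  have himg : ∀ V ∈ π, V ≠ I → (V.image q).image (pos k) = V := by
    intro V hV hVI
    rw [Finset.image_image]
    conv_rhs => rw [← Finset.image_id (s := V)]
    exact Finset.image_congr fun x hx => (hout V hV hVI x hx).1
  refine ⟨n - r, a, r, (π.erase I).image fun V => V.image q, by omega, hr, ⟨?_, ?_, ?_⟩, ?_, ?_, ?_⟩
  · intro W hW
    obtain ⟨V, hV, rfl⟩ := Finset.mem_image.1 hW
    exact (hne V (Finset.mem_of_mem_erase hV)).image q
  · intro W hW y hy
    obtain ⟨V, hV, rfl⟩ := Finset.mem_image.1 hW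
    obtain ⟨x, hx, rfl⟩ := Finset.mem_image.1 hy
    obtain ⟨h1, h2⟩ := Finset.mem_erase.1 hV
    exact Finset.mem_Icc.2 (hout V h2 h1 x hx).2
  · intro y hy
    rw [Finset.mem_Icc] at hy
    have hyI : pos k y ∉ I := by
      rw [hIdef, Finset.mem_Icc, hpos]
      split_ifs <;> omega
    obtain ⟨V, ⟨hV, hyV⟩, hu⟩ := huniq (pos k y) (by
      rw [Finset.mem_Icc, hpos]
      split_ifs <;> omega)
    have hVI : V ≠ I := fun e => hyI (e ▸ hyV)
    refine ⟨V.image q, ⟨Finset.mem_image_of_mem _ (Finset.mem_erase.2 ⟨hVI, hV⟩),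
      Finset.mem_image.2 ⟨_, hyV, hqp y⟩⟩, ?_⟩
    rintro W ⟨hW, hyW⟩
    obtain ⟨V', hV', rfl⟩ := Finset.mem_image.1 hW
    obtain ⟨x, hx, rfl⟩ := Finset.mem_image.1 hyW
    obtain ⟨h1, h2⟩ := Finset.mem_erase.1 hV'
    rw [hu V' ⟨h2, by rw [(hout V' h2 h1 x hx).1]; exact hx⟩]
  · intro W hW W' hW' hWW' x hx y hy z hz w hw
    obtain ⟨V, hV, rfl⟩ := Finset.mem_image.1 hW
    obtain ⟨V', hV', rfl⟩ := Finset.mem_image.1 hW'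
    obtain ⟨h1, h2⟩ := Finset.mem_erase.1 hV
    obtain ⟨h1', h2'⟩ := Finset.mem_erase.1 hV'
    have hp : ∀ t ∈ V.image q, pos k t ∈ V := fun t ht => by
      have := Finset.mem_image_of_mem (pos k) ht
      rwa [himg V h2 h1] at this
    have hp' : ∀ t ∈ V'.image q, pos k t ∈ V' := fun t ht => by
      have := Finset.mem_image_of_mem (pos k) ht
      rwa [himg V' h2' h1'] at this
    rintro ⟨l1, l2, l3⟩
    exact hnc V h2 V' h2' (fun e => hWW' (by rw [e])) _ (hp x hx) _ (hp y hy) _ (hp' z hz) _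
      (hp' w hw) ⟨hmono l1, hmono l2, hmono l3⟩
  · rw [hshift, if_neg (by omega)]
    omega
  · ext W
    rw [mem_gapInsert]
    have hIimg : (Finset.Icc 1 r).image (fun x => x + pos k a) = I := by
      rw [hpos, if_pos le_rfl, Finset.image_add_right_Icc, hIdef, add_comm 1 a, add_comm r a]
    constructor
    · intro hW
      by_cases hWI : W = I
      · exact Or.inl ⟨a, by omega, Finset.Icc 1 r, by simp [oneBlock], by rw [hWI, hIimg]⟩
      · exact Or.inr ⟨_, Finset.mem_image_of_mem _ (Finset.mem_erase.2 ⟨hWI, hW⟩),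
          himg W hW hWI⟩
    · rintro (⟨i, -, V, hV, rfl⟩ | ⟨V, hV, rfl⟩)
      · by_cases hi : i = a
        · subst hi
          simp only [if_true, oneBlock, Finset.mem_singleton] at hV
          rw [hV, hIimg]
          exact hI
        · simp [hi] at hV
      · obtain ⟨V', hV', rfl⟩ := Finset.mem_image.1 hV
        obtain ⟨h1, h2⟩ := Finset.mem_erase.1 hV'
        rw [himg V' h2 h1]
        exact h2

lemma IsMultExt.unique {B : Type*} [AddCommGroup B] [Module ℂ B]
    {f : ∀ k : ℕ, MultilinearMap ℂ (fun _ : Fin k => B) B}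
    {F G : ℕ → Finset (Finset ℕ) → Op B} (hF : IsMultExt f F) (hG : IsMultExt f G)
    (n : ℕ) : ∀ π, IsPartitionOn n π → IsNoncrossing π → F n π = G n π := by
  induction n using Nat.strong_induction_on with
  | _ n ih =>
    intro π hπ hnc
    obtain ⟨F0, F1, Fm⟩ := hF
    obtain ⟨G0, G1, Gm⟩ := hG
    rcases Nat.eq_zero_or_pos n with rfl | hn
    · obtain rfl : π = ∅ := by
        refine Finset.eq_empty_of_forall_notMem fun V hV => ?_
        obtain ⟨x, hx⟩ := hπ.1 V hV
        simpa using hπ.2.1 V hV x hx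
      rw [F0, G0]
    · obtain ⟨m, a, r, σ, hm, hr, hσ, hσnc, hn', hπ'⟩ := exists_gapInsert_eq hπ hnc hn
      have hα : ∀ i ≤ m, IsPartitionOn (if i = a then r else 0) (if i = a then oneBlock r else ∅) ∧
          IsNoncrossing (if i = a then oneBlock r else ∅) := by
        intro i _
        split_ifs
        · exact ⟨isPartitionOn_oneBlock hr, isNoncrossing_oneBlock r⟩
        · exact ⟨isPartitionOn_empty, isNoncrossing_empty⟩
      rw [hπ', hn', Fm m _ σ _ hσ hσnc hα, Gm m _ σ _ hσ hσnc hα, ih m hm σ hσ hσnc]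
      congr 1
      funext i
      split_ifs
      · rw [F1 r hr, G1 r hr]
      · rw [F0, G0]

/-- Unique multiplicative extension to the gap-insertion operad: given
`k`-multilinear maps `f k` for `k ≥ 2` satisfying the interchange relation
`f m ∘_m f n = f n ∘_1 f m`, there is a unique family `(F π)` over non-crossing
partitions (with `F π` of arity `n+1` for `π ∈ NC(n)`) such that `F ∅ = id_B`,
`F` takes the value `f (j+1)` on the one-block partition `1_{j+1}` of `[j]`, and
`F (ρ(π; α₀,…,α_n)) = (F π) ∘ (F α₀, …, F α_n)` for all non-crossing `π, αᵢ`. -/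
theorem unique_multiplicative_extension (B : Type*) [AddCommGroup B] [Module ℂ B]
    (f : ∀ k : ℕ, MultilinearMap ℂ (fun _ : Fin k => B) B)
    (hinter : ∀ m n : ℕ, 2 ≤ m → 2 ≤ n →
      opPartial m n (toOp m (f m)) (toOp n (f n)) =
        opPartial 1 m (toOp n (f n)) (toOp m (f m))) :
    ∃ F : ℕ → Finset (Finset ℕ) → Op B,
      (F 0 (∅ : Finset (Finset ℕ)) = opId B) ∧
      (∀ j, 1 ≤ j → F j (oneBlock j) = toOp (j + 1) (f (j + 1))) ∧
      (∀ (n : ℕ) (k : ℕ → ℕ) (π : Finset (Finset ℕ)) (α : ℕ → Finset (Finset ℕ)),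
        IsPartitionOn n π → IsNoncrossing π →
        (∀ i ≤ n, IsPartitionOn (k i) (α i) ∧ IsNoncrossing (α i)) →
        F (n + gapShift k (n + 1)) (gapInsert n k π α) =
          opComp (fun i => k i + 1) (F n π) (fun i => F (k i) (α i))) ∧
      (∀ F' : ℕ → Finset (Finset ℕ) → Op B,
        (F' 0 (∅ : Finset (Finset ℕ)) = opId B) →
        (∀ j, 1 ≤ j → F' j (oneBlock j) = toOp (j + 1) (f (j + 1))) →
        (∀ (n : ℕ) (k : ℕ → ℕ) (π : Finset (Finset ℕ)) (α : ℕ → Finset (Finset ℕ)),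
          IsPartitionOn n π → IsNoncrossing π →
          (∀ i ≤ n, IsPartitionOn (k i) (α i) ∧ IsNoncrossing (α i)) →
          F' (n + gapShift k (n + 1)) (gapInsert n k π α) =
            opComp (fun i => k i + 1) (F' n π) (fun i => F' (k i) (α i))) →
        ∀ (n : ℕ) (π : Finset (Finset ℕ)),
          IsPartitionOn n π → IsNoncrossing π → F' n π = F n π) := by
  have hext : IsMultExt f (multExt f) :=
    ⟨rfl, fun j hj => multExt_oneBlock hj,
      fun n k π α _ _ hα => multExt_gapInsert hinter π fun i hi => (hα i hi).1⟩
  exact ⟨multExt f, hext.1, hext.2.1, hext.2.2,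
    fun F' h0 h1 hm n π hπ hnc => IsMultExt.unique ⟨h0, h1, hm⟩ hext n π hπ hnc⟩
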